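/- For every λ ∈ I(m,n) one has 𝐀_λ = L_λ(A_•), and the matrices L_λ(E_•) (λ ∈ I(m,n)) are the primitive idempotents of the ordered Hamming scheme 𝔛(m,n): L_λ(E_•)L_μ(E_•) = δ_{λμ}L_λ(E_•) for all λ,μ ∈ I(m,n); Σ_{λ∈I(m,n)} L_λ(E_•) equals the identity matrix of Mat_{X^n}(ℂ); |X|^n·L_{(n,0,…,0)}(E_•) equals the all-ones matrix; and each L_λ(E_•) lies in the ℂ-linear span of {𝐀_μ : μ ∈ I(m,n)}. -/

import Mathlib

/-!
The proof works with tensor products of matrices (`piKron`), which multiply factorwise and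
are multilinear. By definition `L_λ(M_•)` is the sum of the tensors `M_{f(1)} ⊗ ⋯ ⊗ M_{f(n)}`
over the functions `f` whose fibre sizes (`cnt f`) are `λ` (`Lmat_eq_sum_piKron`).

* `A_j` has `(x,y)`-entry `1` exactly when `x - y` has level `j` (`AdjOne_apply`), so only
  the function `i ↦ level (x_i - y_i)` contributes to the `(x,y)`-entry of `L_λ(A_•)`, and it
  is counted exactly when `x - y` has shape `λ`.
* The `E_j` are themselves tensors with factors `J̃`, `I - J̃`, `I`. Since `J̃² = J̃`, they are
  pairwise orthogonal idempotents (`IdemOne_mul`), and a telescoping argument shows that they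
  sum to the identity (`sum_IdemOne`). Hence the tensors of the `E_j` are orthogonal
  idempotents with sum `(∑ E_j)^{⊗n} = 1`, and grouping them by fibre sizes gives the
  orthogonality and completeness of the `L_λ(E_•)`.
* The only function with fibre sizes `(n,0,…,0)` is the constant `0`, and `E_0 = |X|⁻¹ J`.
* The `(x,y)`-entry of `E_j` depends only on the level of `x - y` (`IdemOne_apply_eq_coef`).
  Two functions on `{1,…,n}` with the same fibre sizes differ by a permutation
  (`exists_perm_of_cnt_eq`), so the `(x,y)`-entry of `L_λ(E_•)` depends only on the shape of
  `x - y`. A matrix with this property is a combination of the `𝐀_μ`.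
-/

open Matrix BigOperators

noncomputable section

namespace OHS

variable (m : ℕ) (q : ℕ → ℕ)

/-- The vertex set `X = ∏_{s=1}^m ℤ/q_sℤ` of `𝔛(m,1)`. -/
abbrev Vtx : Type := (i : Fin m) → ZMod (q ((i : ℕ) + 1))

/-- The adjacency matrices `A_j` of `𝔛(m,1)`, given entrywise
(the Kronecker product `J_1⊗⋯⊗J_{j−1}⊗(J_j−I_j)⊗I_{j+1}⊗⋯⊗I_m`, and `A_0` the identity). -/
def AdjOne (j : ℕ) : Matrix (Vtx m q) (Vtx m q) ℂ :=
  Matrix.of fun x y => ∏ i : Fin m,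
    if (i : ℕ) + 1 < j then (1 : ℂ)
    else if (i : ℕ) + 1 = j then (if x i = y i then 0 else 1)
    else if x i = y i then 1 else 0

/-- The primitive idempotents `E_j` of `𝔛(m,1)`, given entrywise
(`E_0 = J̃_1⊗⋯⊗J̃_m`, `E_j = J̃_1⊗⋯⊗J̃_{m−j}⊗(I_{m−j+1}−J̃_{m−j+1})⊗I_{m−j+2}⊗⋯⊗I_m`). -/
def IdemOne (j : ℕ) : Matrix (Vtx m q) (Vtx m q) ℂ :=
  Matrix.of fun x y => ∏ i : Fin m,
    if (i : ℕ) + 1 < m - j + 1 then ((q ((i : ℕ) + 1) : ℂ))⁻¹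
    else if (i : ℕ) + 1 = m - j + 1 then
      (if x i = y i then (1 : ℂ) else 0) - ((q ((i : ℕ) + 1) : ℂ))⁻¹
    else if x i = y i then 1 else 0

/-- The dual primitive idempotents `E*_j` w.r.t. the base point `0`:
the diagonal matrix whose `(y,y)` entry is the `(0,y)` entry of `A_j`. -/
def DualIdemOne (j : ℕ) : Matrix (Vtx m q) (Vtx m q) ℂ :=
  Matrix.diagonal fun y => AdjOne m q j 0 y

/-- The valency `k_j`: `k_0 = 1` and `k_j = (q_j−1)∏_{s<j} q_s`. -/
def valency (j : ℕ) : ℕ :=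
  ∏ i : Fin m,
    if (i : ℕ) + 1 < j then q ((i : ℕ) + 1)
    else if (i : ℕ) + 1 = j then q ((i : ℕ) + 1) - 1
    else 1

/-- The multiplicity `m_j`: `m_0 = 1` and `m_j = (q_{m−j+1}−1)∏_{s=m−j+2}^m q_s`. -/
def multiplicity (j : ℕ) : ℕ :=
  ∏ i : Fin m,
    if m - j + 1 < (i : ℕ) + 1 then q ((i : ℕ) + 1)
    else if (i : ℕ) + 1 = m - j + 1 then q ((i : ℕ) + 1) - 1
    else 1

section WithFintype

variable [∀ i, NeZero (q i)]

/-- `F_j = (|X|/m_j)·E_j E*_0 E_j`. -/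
def Fmat (j : ℕ) : Matrix (Vtx m q) (Vtx m q) ℂ :=
  ((Fintype.card (Vtx m q) : ℂ) / (multiplicity m q j : ℂ)) •
    (IdemOne m q j * DualIdemOne m q 0 * IdemOne m q j)

/-- `F*_j = (|X|/k_j)·E*_j E_0 E*_j`. -/
def FmatStar (j : ℕ) : Matrix (Vtx m q) (Vtx m q) ℂ :=
  ((Fintype.card (Vtx m q) : ℂ) / (valency m q j : ℂ)) •
    (DualIdemOne m q j * IdemOne m q 0 * DualIdemOne m q j)

/-- `G_j = E_j − F_j`. -/
def Gmat (j : ℕ) : Matrix (Vtx m q) (Vtx m q) ℂ := IdemOne m q j - Fmat m q j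

/-- `G*_j = E*_j − F*_j`. -/
def GmatStar (j : ℕ) : Matrix (Vtx m q) (Vtx m q) ℂ :=
  DualIdemOne m q j - FmatStar m q j

/-- The Terwilliger algebra of `𝔛(m,1)` w.r.t. the base point `0`: the unital
ℂ-subalgebra generated by the adjacency matrices and the dual idempotents. -/
def Ter1 : Subalgebra ℂ (Matrix (Vtx m q) (Vtx m q) ℂ) :=
  Algebra.adjoin ℂ
    ({M | ∃ j ≤ m, M = AdjOne m q j} ∪ {M | ∃ j ≤ m, M = DualIdemOne m q j})

end WithFintype

/-- `Λ(m)`: pairs `(i,j)` with `1 ≤ i,j ≤ m` and either `i+j > m+1`,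
or `i+j = m+1` and `q_i ≥ 3`. -/
def LamSet : Finset (ℕ × ℕ) :=
  ((Finset.Icc 1 m) ×ˢ (Finset.Icc 1 m)).filter
    fun p => m + 1 < p.1 + p.2 ∨ (p.1 + p.2 = m + 1 ∧ 3 ≤ q p.1)

variable (n : ℕ)

/-- The largest (1-based) position where `v` is nonzero; `0` if `v = 0`. -/
def level (v : Vtx m q) : ℕ :=
  (Finset.univ.filter fun i : Fin m => v i ≠ 0).sup fun i => (i : ℕ) + 1

/-- `I(m,n)`: tuples `(λ_0,…,λ_m)` of naturals summing to `n`. -/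
def ShapeSet : Finset (Fin (m + 1) → ℕ) :=
  (Fintype.piFinset fun _ : Fin (m + 1) => Finset.range (n + 1)).filter
    fun lam => ∑ j, lam j = n

/-- `x ∈ X^n` has shape `λ`. -/
def hasShape (x : Fin n → Vtx m q) (lam : Fin (m + 1) → ℕ) : Prop :=
  ∀ j : Fin (m + 1),
    (Finset.univ.filter fun i : Fin n => level m q (x i) = (j : ℕ)).card = lam j

instance (x : Fin n → Vtx m q) (lam : Fin (m + 1) → ℕ) :
    Decidable (hasShape m q n x lam) := by
  unfold hasShape; infer_instance

/-- The `λ`-th adjacency matrix `𝐀_λ` of the ordered Hamming scheme `𝔛(m,n)`. -/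
def AdjN (lam : Fin (m + 1) → ℕ) :
    Matrix (Fin n → Vtx m q) (Fin n → Vtx m q) ℂ :=
  Matrix.of fun x y => if hasShape m q n (fun i => x i - y i) lam then 1 else 0

/-- The `λ`-th dual primitive idempotent `𝐄*_λ` of `𝔛(m,n)` (base point `0`). -/
def DualIdemN (lam : Fin (m + 1) → ℕ) :
    Matrix (Fin n → Vtx m q) (Fin n → Vtx m q) ℂ :=
  Matrix.diagonal fun y => if hasShape m q n y lam then 1 else 0

/-- `L_λ(M_•)`: entrywise, the sum over functions `f` with `#f⁻¹(j) = λ_j` of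
`∏_i (M_{f(i)})_{x_i,y_i}`. -/
def Lmat {ι : Type*} [Fintype ι] [DecidableEq ι]
    (M : ι → Matrix (Vtx m q) (Vtx m q) ℂ) (lam : ι → ℕ) :
    Matrix (Fin n → Vtx m q) (Fin n → Vtx m q) ℂ :=
  Matrix.of fun x y =>
    ∑ f ∈ Finset.univ.filter
        (fun f : Fin n → ι =>
          ∀ j, (Finset.univ.filter fun i => f i = j).card = lam j),
      ∏ i, M (f i) (x i) (y i)

/-- The Kronecker product `M_1⊗⋯⊗M_n`. -/
def kron (M : Fin n → Matrix (Vtx m q) (Vtx m q) ℂ) :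
    Matrix (Fin n → Vtx m q) (Fin n → Vtx m q) ℂ :=
  Matrix.of fun x y => ∏ i, M i (x i) (y i)

section WithFintype2

variable [∀ i, NeZero (q i)]

/-- The Terwilliger algebra `𝐓(m,n)` of `𝔛(m,n)` w.r.t. the zero base point. -/
def TerN : Subalgebra ℂ (Matrix (Fin n → Vtx m q) (Fin n → Vtx m q) ℂ) :=
  Algebra.adjoin ℂ
    ({M | ∃ lam ∈ ShapeSet m n, M = AdjN m q n lam} ∪
      {M | ∃ lam ∈ ShapeSet m n, M = DualIdemN m q n lam})

end WithFintype2

/-- The entry `P_i(j; r)` of the first eigenmatrix for the parameter sequence `r`. -/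
def PEnt (r : ℕ → ℕ) (i j : ℕ) : ℂ :=
  if i + j < m + 1 then (valency m r i : ℂ)
  else if i + j = m + 1 then -(valency m r i : ℂ) / ((r i : ℂ) - 1)
  else 0

/-- The multivariate Krawtchouk polynomial `K_μ(λ; r_1,…,r_m)`: the coefficient of
`z^μ` in `∏_{j=0}^m (Σ_{i=0}^m P_i(j;r) z_i)^{λ_j}`. -/
def Kraw (r : ℕ → ℕ) (mu lam : Fin (m + 1) → ℕ) : ℂ :=
  MvPolynomial.coeff (Finsupp.equivFunOnFinite.symm mu)
    (∏ j : Fin (m + 1),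
      (∑ i : Fin (m + 1),
        MvPolynomial.C (PEnt m r (i : ℕ) (j : ℕ)) * MvPolynomial.X i) ^ lam j)

/-- `C(m,n)`: tuples `(τ_1,…,τ_m)` of naturals summing to `n`. -/
def Ctuples : Finset (Fin m → ℕ) :=
  (Fintype.piFinset fun _ : Fin m => Finset.range (n + 1)).filter
    fun t => ∑ i, t i = n

/-- `Θ(λ,μ)`: nonnegative-integer `m×m` matrices supported on `Λ(m)` with row
sums `λ` and column sums `μ`. -/
def ThetaSet (lam mu : Fin m → ℕ) : Finset (Fin m → Fin m → ℕ) :=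
  (Fintype.piFinset fun _ : Fin m =>
      Fintype.piFinset fun _ : Fin m => Finset.range (n + 1)).filter
    fun c =>
      (∀ i j : Fin m, ((i : ℕ) + 1, (j : ℕ) + 1) ∉ LamSet m q → c i j = 0) ∧
      (∀ i, ∑ j, c i j = lam i) ∧ (∀ j, ∑ i, c i j = mu j)

/-- `Ω(m,n)`: the pairs `(λ,μ)` with `Θ(λ,μ) ≠ ∅`. -/
def OmegaSet : Finset ((Fin m → ℕ) × (Fin m → ℕ)) :=
  ((Ctuples m n) ×ˢ (Ctuples m n)).filter
    fun p => (ThetaSet m q n p.1 p.2).Nonempty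

/-- The permutation matrix `P_σ` of the coordinate permutation
`(x_1,…,x_n) ↦ (x_{σ⁻¹(1)},…,x_{σ⁻¹(n)})` of `X^n`. -/
def permMat (σ : Equiv.Perm (Fin n)) :
    Matrix (Fin n → Vtx m q) (Fin n → Vtx m q) ℂ :=
  Matrix.of fun x y => if x = y ∘ ⇑σ⁻¹ then 1 else 0

/-! ### Tensor products of matrices -/

/-- The tensor product `⨂_i M_i` of a finite family of square matrices, with rows and columns
indexed by the product of the index types. -/
def piKron {ι : Type*} [Fintype ι] {α : ι → Type*} (M : ∀ i, Matrix (α i) (α i) ℂ) :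
    Matrix (∀ i, α i) (∀ i, α i) ℂ :=
  Matrix.of fun x y => ∏ i, M i (x i) (y i)

theorem piKron_mul {ι : Type*} [Fintype ι] [DecidableEq ι] {α : ι → Type*}
    [∀ i, Fintype (α i)] (M N : ∀ i, Matrix (α i) (α i) ℂ) :
    piKron M * piKron N = piKron fun i => M i * N i := by
  ext x y
  simp only [piKron, Matrix.mul_apply, Matrix.of_apply, ← Finset.prod_mul_distrib]
  rw [Finset.prod_univ_sum, Fintype.piFinset_univ]

theorem piKron_one {ι : Type*} [Fintype ι] {α : ι → Type*}
    [∀ i, DecidableEq (α i)] [DecidableEq (∀ i, α i)] :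
    piKron (fun i => (1 : Matrix (α i) (α i) ℂ)) = 1 := by
  ext x y
  simp only [piKron, Matrix.of_apply, Matrix.one_apply]
  by_cases h : x = y
  · simp [h]
  · obtain ⟨i, hi⟩ := Function.ne_iff.mp h
    rw [if_neg h]
    exact Finset.prod_eq_zero (Finset.mem_univ i) (if_neg hi)

theorem piKron_eq_zero {ι : Type*} [Fintype ι] {α : ι → Type*}
    {M : ∀ i, Matrix (α i) (α i) ℂ} {i : ι} (h : M i = 0) : piKron M = 0 := by
  ext x y
  exact Finset.prod_eq_zero (Finset.mem_univ i) (by simp [h])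

/-- Multilinear expansion of `(∑_j M_j)^{⊗n}`. -/
theorem sum_piKron {n : ℕ} {ι : Type*} [Fintype ι] [DecidableEq ι] {α : Type*}
    (M : ι → Matrix α α ℂ) :
    ∑ f : Fin n → ι, piKron (fun i => M (f i)) = piKron (fun _ : Fin n => ∑ j, M j) := by
  ext x y
  simp only [piKron, Matrix.sum_apply, Matrix.of_apply]
  rw [Finset.prod_univ_sum, Fintype.piFinset_univ]

/-! ### Fibre sizes -/

/-- The fibre sizes `j ↦ #f⁻¹(j)` of a function `f`. -/
def cnt {n : ℕ} {ι : Type*} [DecidableEq ι] (f : Fin n → ι) : ι → ℕ :=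
  fun j => (Finset.univ.filter fun i => f i = j).card

theorem cnt_mem_ShapeSet {m n : ℕ} (f : Fin n → Fin (m + 1)) : cnt f ∈ ShapeSet m n := by
  simp only [ShapeSet, Finset.mem_filter, Fintype.mem_piFinset, Finset.mem_range]
  refine ⟨fun j => Nat.lt_succ_of_le ?_, ?_⟩
  · exact (Finset.card_le_univ _).trans (by simp)
  · have := Finset.card_eq_sum_card_fiberwise (f := f) (s := Finset.univ) (t := Finset.univ)
      (by simp)
    simpa [cnt] using this.symm

theorem exists_perm_of_cnt_eq {n : ℕ} {ι : Type*} [DecidableEq ι] {f g : Fin n → ι}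
    (h : cnt f = cnt g) : ∃ σ : Equiv.Perm (Fin n), ∀ i, g (σ i) = f i := by
  have e : ∀ c, Nonempty ({ a // f a = c } ≃ { b // g b = c }) := fun c => by
    refine ⟨Fintype.equivOfCardEq ?_⟩
    rw [Fintype.card_subtype, Fintype.card_subtype]
    exact congrFun h c
  exact ⟨Equiv.ofFiberEquiv fun c => (e c).some, Equiv.ofFiberEquiv_map _⟩

theorem cnt_comp_perm {n : ℕ} {ι : Type*} [DecidableEq ι] (f : Fin n → ι)
    (σ : Equiv.Perm (Fin n)) : cnt (fun i => f (σ i)) = cnt f := by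
  funext j
  simp only [cnt, ← Fintype.card_subtype]
  exact Fintype.card_congr (σ.subtypeEquiv fun _ => Iff.rfl)

theorem Lmat_eq_sum_piKron {m n : ℕ} {q : ℕ → ℕ} {ι : Type*} [Fintype ι] [DecidableEq ι]
    (M : ι → Matrix (Vtx m q) (Vtx m q) ℂ) (lam : ι → ℕ) :
    Lmat m q n M lam =
      ∑ f ∈ Finset.univ.filter (fun f : Fin n → ι => cnt f = lam),
        piKron (fun i => M (f i)) := by
  ext x y
  simp only [Lmat, piKron, Matrix.sum_apply, Matrix.of_apply]
  refine Finset.sum_congr (Finset.filter_congr fun f _ => ?_) fun _ _ => rfl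
  exact funext_iff.symm

/-! ### Levels and the adjacency matrices -/

theorem level_le_iff {m : ℕ} {q : ℕ → ℕ} {v : Vtx m q} {k : ℕ} :
    level m q v ≤ k ↔ ∀ i : Fin m, k < (i : ℕ) + 1 → v i = 0 := by
  simp only [level, Finset.sup_le_iff, Finset.mem_filter, Finset.mem_univ, true_and]
  refine forall_congr' fun i => ?_
  rw [← not_lt, not_imp_not]

theorem level_le {m : ℕ} {q : ℕ → ℕ} (v : Vtx m q) : level m q v ≤ m :=
  level_le_iff.2 fun i hi => by have := i.2; omega

theorem ne_zero_of_level_eq {m : ℕ} {q : ℕ → ℕ} {v : Vtx m q} {i : Fin m}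
    (h : level m q v = (i : ℕ) + 1) : v i ≠ 0 := by
  intro h0
  have : level m q v ≤ i := level_le_iff.2 fun k hk => by
    rcases eq_or_ne k i with rfl | hne
    · exact h0
    · have : (k : ℕ) ≠ i := fun h => hne (Fin.ext h)
      exact level_le_iff.1 h.le k (by omega)
  omega

/-- The level of `v`, as an index of the scheme `𝔛(m,1)`. -/
def lvl {m : ℕ} {q : ℕ → ℕ} (v : Vtx m q) : Fin (m + 1) :=
  ⟨level m q v, Nat.lt_succ_of_le (level_le v)⟩

theorem hasShape_iff {m n : ℕ} {q : ℕ → ℕ} {x : Fin n → Vtx m q} {lam : Fin (m + 1) → ℕ} :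
    hasShape m q n x lam ↔ cnt (fun i => lvl (x i)) = lam := by
  simp only [hasShape, funext_iff, cnt, lvl, Fin.ext_iff]

theorem AdjOne_apply {m : ℕ} {q : ℕ → ℕ} (x y : Vtx m q) (j : Fin (m + 1)) :
    AdjOne m q j x y = if lvl (x - y) = j then 1 else 0 := by
  simp only [AdjOne, Matrix.of_apply]
  split_ifs with h
  · have h' : level m q (x - y) = j := congrArg Fin.val h
    refine Finset.prod_eq_one fun i _ => ?_
    split_ifs with h1 h2 h3 h4
    · rfl
    · exact absurd (sub_eq_zero.2 h3) (ne_zero_of_level_eq (h'.trans h2.symm))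
    · rfl
    · rfl
    · exact absurd (sub_eq_zero.1 (level_le_iff.1 h'.le i (by omega))) h4
  · have hne : level m q (x - y) ≠ j := fun e => h (Fin.ext e)
    rcases lt_or_gt_of_ne hne with hlt | hgt
    · -- the level is below `j`, so the factor `J - I` at position `j` vanishes
      have hj := j.2
      refine Finset.prod_eq_zero (Finset.mem_univ (⟨(j : ℕ) - 1, by omega⟩ : Fin m)) ?_
      have e : (j : ℕ) - 1 + 1 = j := by omega
      have := level_le_iff.1 (Nat.le_sub_one_of_lt hlt) ⟨(j : ℕ) - 1, by omega⟩
        (Nat.lt_succ_self _)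
      simp only [e, lt_irrefl, if_false, if_true]
      rw [if_pos (sub_eq_zero.1 this)]
    · -- the level is above `j`, so the factor `I` at that position vanishes
      have hl := level_le (x - y)
      have e : level m q (x - y) - 1 + 1 = level m q (x - y) := by omega
      have := ne_zero_of_level_eq (v := x - y) (i := ⟨level m q (x - y) - 1, by omega⟩) e.symm
      refine Finset.prod_eq_zero
        (Finset.mem_univ (⟨level m q (x - y) - 1, by omega⟩ : Fin m)) ?_
      rw [if_neg (by simp only; omega), if_neg (by simp only; omega),
        if_neg (fun h => this (sub_eq_zero.2 h))]

theorem AdjN_eq_Lmat {m n : ℕ} {q : ℕ → ℕ} (lam : Fin (m + 1) → ℕ) :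
    AdjN m q n lam = Lmat m q n (fun j : Fin (m + 1) => AdjOne m q (j : ℕ)) lam := by
  ext x y
  rw [Lmat_eq_sum_piKron]
  simp only [AdjN, piKron, Matrix.sum_apply, Matrix.of_apply, AdjOne_apply, hasShape_iff]
  have key : ∀ f : Fin n → Fin (m + 1),
      (∏ i, if lvl (x i - y i) = f i then (1 : ℂ) else 0) =
        if (fun i => lvl (x i - y i)) = f then 1 else 0 := fun f => by
    rw [Finset.prod_ite_zero]
    simp [funext_iff]
  simp only [key, Finset.sum_ite_eq, Finset.mem_filter, Finset.mem_univ, true_and]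

/-! ### The idempotents of `𝔛(m,1)` -/

/-- The averaging idempotent `J̃ = r⁻¹ J` on `ℤ/rℤ`. -/
def avg (r : ℕ) : Matrix (ZMod r) (ZMod r) ℂ := Matrix.of fun _ _ => (r : ℂ)⁻¹

theorem avg_mul_avg (r : ℕ) [NeZero r] : avg r * avg r = avg r := by
  have : (r : ℂ) ≠ 0 := Nat.cast_ne_zero.2 (NeZero.ne r)
  ext x y
  simp [avg, Matrix.mul_apply, ZMod.card, this]

/-- The tensor factor of `E_j` at position `i + 1`. -/
def idemFac (m : ℕ) (q : ℕ → ℕ) (j : ℕ) (i : Fin m) :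
    Matrix (ZMod (q ((i : ℕ) + 1))) (ZMod (q ((i : ℕ) + 1))) ℂ :=
  if (i : ℕ) + 1 < m - j + 1 then avg _
  else if (i : ℕ) + 1 = m - j + 1 then 1 - avg _ else 1

theorem IdemOne_eq_piKron (m : ℕ) (q : ℕ → ℕ) (j : ℕ) :
    IdemOne m q j = piKron (idemFac m q j) := by
  ext x y
  simp only [IdemOne, piKron, Matrix.of_apply]
  refine Finset.prod_congr rfl fun i _ => ?_
  unfold idemFac
  split_ifs <;> simp [avg, Matrix.one_apply, *]

theorem IdemOne_mul_of_lt {m : ℕ} {q : ℕ → ℕ} [∀ i, NeZero (q i)] {j k : ℕ}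
    (hjk : j < k) (hk : k ≤ m) :
    IdemOne m q j * IdemOne m q k = 0 ∧ IdemOne m q k * IdemOne m q j = 0 := by
  -- at position `m - k + 1` the two factors are `J̃` and `I - J̃`
  have hj' : idemFac m q j ⟨m - k, by omega⟩ = avg _ := by
    unfold idemFac
    rw [if_pos (by simp only; omega)]
  have hk' : idemFac m q k ⟨m - k, by omega⟩ = 1 - avg _ := by
    unfold idemFac
    rw [if_neg (by simp only; omega), if_pos (by simp only)]
  rw [IdemOne_eq_piKron, IdemOne_eq_piKron, piKron_mul, piKron_mul]
  constructor <;> refine piKron_eq_zero (i := ⟨m - k, by omega⟩) ?_ <;> rw [hj', hk']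
  · rw [mul_sub, mul_one, avg_mul_avg, sub_self]
  · rw [sub_mul, one_mul, avg_mul_avg, sub_self]

theorem IdemOne_mul {m : ℕ} {q : ℕ → ℕ} [∀ i, NeZero (q i)] (j k : Fin (m + 1)) :
    IdemOne m q j * IdemOne m q k = if j = k then IdemOne m q j else 0 := by
  rcases lt_trichotomy j k with h | rfl | h
  · rw [if_neg h.ne]
    exact (IdemOne_mul_of_lt h (Nat.lt_succ_iff.1 k.2)).1
  · rw [if_pos rfl, IdemOne_eq_piKron, piKron_mul]
    congr 1
    funext i
    unfold idemFac
    split_ifs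
    · exact avg_mul_avg _
    · rw [mul_sub, mul_one, sub_mul, one_mul, avg_mul_avg, sub_self, sub_zero]
    · exact one_mul _
  · rw [if_neg h.ne']
    exact (IdemOne_mul_of_lt h (Nat.lt_succ_iff.1 j.2)).2

/-- The partial sums `E_0 + ⋯ + E_k` telescope to `J̃_1 ⊗ ⋯ ⊗ J̃_{m-k} ⊗ I ⊗ ⋯ ⊗ I`. -/
theorem sum_range_IdemOne {m : ℕ} {q : ℕ → ℕ} {k : ℕ} (hk : k ≤ m) :
    ∑ j ∈ Finset.range (k + 1), IdemOne m q j =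
      piKron fun i : Fin m => if (i : ℕ) + 1 < m - k + 1 then avg (q ((i : ℕ) + 1)) else 1 := by
  induction k with
  | zero =>
    rw [zero_add, Finset.sum_range_one, IdemOne_eq_piKron]
    congr 1
    funext i
    have := i.2
    simp only [idemFac]
    rw [if_pos (by omega), if_pos (by omega)]
  | succ k ih =>
    rw [Finset.sum_range_succ, ih (by omega), IdemOne_eq_piKron]
    ext x y
    simp only [piKron, Matrix.add_apply, Matrix.of_apply]
    -- the three products differ only at position `m - k`, where `J̃ + (I - J̃) = I`
    refine Finset.prod_add_prod_eq (Finset.mem_univ (⟨m - (k + 1), by omega⟩ : Fin m)) ?_ ?_ ?_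
    · have e : idemFac m q (k + 1) ⟨m - (k + 1), by omega⟩ = 1 - avg _ := by
        unfold idemFac
        rw [if_neg (by simp only; omega), if_pos (by simp only)]
      rw [e, if_pos (by simp only; omega), if_neg (by simp only; omega),
        ← Matrix.add_apply, add_sub_cancel]
    · intro i _ hi
      have : (i : ℕ) ≠ m - (k + 1) := fun h => hi (Fin.ext h)
      by_cases h : (i : ℕ) + 1 < m - k + 1
      · rw [if_pos h, if_pos (by omega)]
      · rw [if_neg h, if_neg (by omega)]
    · intro i _ hi
      have : (i : ℕ) ≠ m - (k + 1) := fun h => hi (Fin.ext h)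
      unfold idemFac
      split_ifs
      · rfl
      · omega
      · rfl

theorem sum_IdemOne {m : ℕ} {q : ℕ → ℕ} :
    ∑ j : Fin (m + 1), IdemOne m q (j : ℕ) = 1 := by
  rw [Fin.sum_univ_eq_sum_range (fun j => IdemOne m q j), sum_range_IdemOne le_rfl,
    ← piKron_one]
  congr 1
  funext i
  rw [if_neg (by omega)]

theorem IdemOne_zero_apply {m : ℕ} {q : ℕ → ℕ} [∀ i, NeZero (q i)] (x y : Vtx m q) :
    IdemOne m q 0 x y = (Fintype.card (Vtx m q) : ℂ)⁻¹ := by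
  simp only [IdemOne, Matrix.of_apply, Fintype.card_pi, ZMod.card, Nat.cast_prod,
    ← Finset.prod_inv_distrib]
  exact Finset.prod_congr rfl fun i _ => if_pos (by have := i.2; omega)

/-- The common value of the entries `(E_j)_{x,y}` with `x - y` of level `l`. -/
def coef (m : ℕ) (q : ℕ → ℕ) (j l : Fin (m + 1)) : ℂ :=
  if m - (j : ℕ) + 1 < (l : ℕ) then 0
  else ∏ i : Fin m,
    if (i : ℕ) + 1 < m - j + 1 then ((q ((i : ℕ) + 1) : ℂ))⁻¹
    else if (i : ℕ) + 1 = m - j + 1 then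
      (if (l : ℕ) < m - j + 1 then (1 : ℂ) else 0) - ((q ((i : ℕ) + 1) : ℂ))⁻¹
    else 1

theorem IdemOne_apply_eq_coef {m : ℕ} {q : ℕ → ℕ} (j : Fin (m + 1)) (x y : Vtx m q) :
    IdemOne m q j x y = coef m q j (lvl (x - y)) := by
  simp only [IdemOne, coef, Matrix.of_apply]
  have hv : (lvl (x - y) : ℕ) = level m q (x - y) := rfl
  have hl := level_le (x - y)
  have hz := fun i : Fin m => level_le_iff.1 (le_refl (level m q (x - y))) i
  by_cases h : m - (j : ℕ) + 1 < (lvl (x - y) : ℕ)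
  · rw [if_pos h]
    -- the factor `I` at the position given by the level vanishes
    have e : level m q (x - y) - 1 + 1 = level m q (x - y) := by omega
    have := ne_zero_of_level_eq (v := x - y) (i := ⟨level m q (x - y) - 1, by omega⟩) e.symm
    refine Finset.prod_eq_zero
      (Finset.mem_univ (⟨level m q (x - y) - 1, by omega⟩ : Fin m)) ?_
    rw [if_neg (by simp only; omega), if_neg (by simp only; omega),
      if_neg (fun h => this (sub_eq_zero.2 h))]
  · rw [if_neg h]
    refine Finset.prod_congr rfl fun i _ => ?_
    by_cases h1 : (i : ℕ) + 1 < m - j + 1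
    · rw [if_pos h1, if_pos h1]
    rw [if_neg h1, if_neg h1]
    by_cases h2 : (i : ℕ) + 1 = m - j + 1
    · rw [if_pos h2, if_pos h2]
      congr 1
      by_cases h3 : (lvl (x - y) : ℕ) < m - j + 1
      · rw [if_pos h3, if_pos (sub_eq_zero.1 (hz i (by omega)))]
      · rw [if_neg h3, if_neg fun h4 => ?_]
        exact ne_zero_of_level_eq (v := x - y) (i := i) (by omega) (sub_eq_zero.2 h4)
    · rw [if_neg h2, if_neg h2, if_pos (sub_eq_zero.1 (hz i (by omega)))]

/-! ### The idempotents of `𝔛(m,n)` -/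

theorem Lmat_IdemOne_mul {m n : ℕ} {q : ℕ → ℕ} [∀ i, NeZero (q i)]
    (lam mu : Fin (m + 1) → ℕ) :
    Lmat m q n (fun j : Fin (m + 1) => IdemOne m q (j : ℕ)) lam *
        Lmat m q n (fun j : Fin (m + 1) => IdemOne m q (j : ℕ)) mu =
      if lam = mu then Lmat m q n (fun j : Fin (m + 1) => IdemOne m q (j : ℕ)) lam
      else 0 := by
  have key : ∀ f g : Fin n → Fin (m + 1),
      piKron (fun i => IdemOne m q (f i : ℕ)) * piKron (fun i => IdemOne m q (g i : ℕ)) =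
        if f = g then piKron (fun i => IdemOne m q (f i : ℕ)) else 0 := fun f g => by
    rw [piKron_mul]
    split_ifs with h
    · subst h
      simp only [IdemOne_mul, if_true]
    · obtain ⟨i, hi⟩ := Function.ne_iff.mp h
      refine piKron_eq_zero (i := i) ?_
      rw [IdemOne_mul, if_neg hi]
  simp only [Lmat_eq_sum_piKron, Finset.sum_mul_sum, key, Finset.sum_ite_eq,
    Finset.mem_filter, Finset.mem_univ, true_and]
  split_ifs with h
  · subst h
    exact Finset.sum_congr rfl fun f hf => if_pos (Finset.mem_filter.1 hf).2
  · exact Finset.sum_eq_zero fun f hf =>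
      if_neg fun h' => h ((Finset.mem_filter.1 hf).2.symm.trans h')

theorem sum_Lmat_IdemOne {m n : ℕ} {q : ℕ → ℕ} :
    ∑ lam ∈ ShapeSet m n,
      Lmat m q n (fun j : Fin (m + 1) => IdemOne m q (j : ℕ)) lam = 1 := by
  simp only [Lmat_eq_sum_piKron]
  rw [Finset.sum_fiberwise_of_maps_to (fun f _ => cnt_mem_ShapeSet f),
    sum_piKron (fun j : Fin (m + 1) => IdemOne m q (j : ℕ)), sum_IdemOne, piKron_one]

theorem cnt_eq_iff_eq_zero {m n : ℕ} (f : Fin n → Fin (m + 1)) :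
    (cnt f = fun j => if j = 0 then n else 0) ↔ f = fun _ => 0 := by
  constructor
  · intro h
    funext i
    by_contra hi
    have h1 := congrFun h (f i)
    rw [if_neg hi] at h1
    have : i ∈ Finset.univ.filter fun k => f k = f i := by simp
    rw [Finset.card_eq_zero.1 h1] at this
    exact absurd this (Finset.notMem_empty i)
  · rintro rfl
    funext j
    by_cases hj : j = 0
    · simp [cnt, hj]
    · simp [cnt, hj, Ne.symm hj]

theorem card_smul_Lmat_IdemOne {m n : ℕ} {q : ℕ → ℕ} [∀ i, NeZero (q i)] :
    (Fintype.card (Vtx m q) : ℂ) ^ n •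
        Lmat m q n (fun j : Fin (m + 1) => IdemOne m q (j : ℕ))
          (fun j => if j = 0 then n else 0) = Matrix.of fun _ _ => 1 := by
  have hc : (Fintype.card (Vtx m q) : ℂ) ≠ 0 := Nat.cast_ne_zero.2 Fintype.card_ne_zero
  ext x y
  rw [Lmat_eq_sum_piKron]
  simp only [cnt_eq_iff_eq_zero]
  rw [Finset.filter_eq', if_pos (Finset.mem_univ _), Finset.sum_singleton]
  simp only [piKron, Matrix.smul_apply, Matrix.of_apply, Fin.val_zero, IdemOne_zero_apply,
    Finset.prod_const, Finset.card_univ, Fintype.card_fin, smul_eq_mul]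
  rw [← mul_pow, mul_inv_cancel₀ hc, one_pow]

/-- A matrix whose `(x,y)`-entry depends only on the shape of `x - y` is in the span of the
`𝐀_μ`. -/
theorem mem_span_AdjN {m n : ℕ} {q : ℕ → ℕ}
    (M : Matrix (Fin n → Vtx m q) (Fin n → Vtx m q) ℂ) (d : (Fin (m + 1) → ℕ) → ℂ)
    (h : ∀ x y, M x y = d (cnt fun i => lvl (x i - y i))) :
    M ∈ Submodule.span ℂ {M | ∃ mu ∈ ShapeSet m n, M = AdjN m q n mu} := by
  have : M = ∑ mu ∈ ShapeSet m n, d mu • AdjN m q n mu := by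
    ext x y
    simp only [Matrix.sum_apply, Matrix.smul_apply, AdjN, Matrix.of_apply, hasShape_iff,
      smul_eq_mul, mul_ite, mul_one, mul_zero, Finset.sum_ite_eq]
    rw [if_pos (cnt_mem_ShapeSet _), h]
  rw [this]
  exact Submodule.sum_mem _ fun mu hmu =>
    Submodule.smul_mem _ _ (Submodule.subset_span ⟨mu, hmu, rfl⟩)

theorem Lmat_IdemOne_mem_span {m n : ℕ} {q : ℕ → ℕ} (lam : Fin (m + 1) → ℕ) :
    Lmat m q n (fun j : Fin (m + 1) => IdemOne m q (j : ℕ)) lam ∈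
      Submodule.span ℂ {M | ∃ mu ∈ ShapeSet m n, M = AdjN m q n mu} := by
  classical
  -- the entry of `L_λ(E_•)` at a pair whose differences have levels `g`
  let Φ : (Fin n → Fin (m + 1)) → ℂ := fun g =>
    ∑ f ∈ Finset.univ.filter (fun f : Fin n → Fin (m + 1) => cnt f = lam),
      ∏ i, coef m q (f i) (g i)
  have hΦ : ∀ g g', cnt g = cnt g' → Φ g = Φ g' := fun g g' hg => by
    obtain ⟨σ, hσ⟩ := exists_perm_of_cnt_eq hg
    symm
    refine Finset.sum_equiv (Equiv.arrowCongr σ.symm (Equiv.refl _)) (fun f => ?_)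
      fun f _ => ?_
    · simp only [Finset.mem_filter, Finset.mem_univ, true_and]
      rw [← cnt_comp_perm f σ]
      rfl
    · rw [← Equiv.prod_comp σ]
      simp [hσ]
  refine mem_span_AdjN _
    (fun mu => if h : ∃ g : Fin n → Fin (m + 1), cnt g = mu then Φ h.choose else 0)
    fun x y => ?_
  have hex : ∃ g : Fin n → Fin (m + 1), cnt g = cnt fun i => lvl (x i - y i) := ⟨_, rfl⟩
  rw [dif_pos hex, hΦ _ _ hex.choose_spec, Lmat_eq_sum_piKron]
  simp only [Matrix.sum_apply, piKron, Matrix.of_apply, IdemOne_apply_eq_coef, Φ]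

/-- For `λ ∈ I(m,n)`: `𝐀_λ = L_λ(A_•)`, and the `L_λ(E_•)` are the primitive
idempotents of `𝔛(m,n)`: they multiply as `L_λ(E_•)L_μ(E_•) = δ_{λμ}L_λ(E_•)`,
sum to the identity, `|X|ⁿ·L_{(n,0,…,0)}(E_•)` is the all-ones matrix, and each
lies in the span of the adjacency matrices `𝐀_μ`. -/
theorem stmt12 (m n : ℕ) (hm : 1 ≤ m) (hn : 1 ≤ n) (q : ℕ → ℕ)
    [∀ i, NeZero (q i)] (hq : ∀ i, 2 ≤ q i) :
    (∀ lam ∈ ShapeSet m n,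
      AdjN m q n lam =
        Lmat m q n (fun j : Fin (m + 1) => AdjOne m q (j : ℕ)) lam) ∧
    (∀ lam ∈ ShapeSet m n, ∀ mu ∈ ShapeSet m n,
      Lmat m q n (fun j : Fin (m + 1) => IdemOne m q (j : ℕ)) lam *
          Lmat m q n (fun j : Fin (m + 1) => IdemOne m q (j : ℕ)) mu =
        if lam = mu then
          Lmat m q n (fun j : Fin (m + 1) => IdemOne m q (j : ℕ)) lam
        else 0) ∧
    (∑ lam ∈ ShapeSet m n,
      Lmat m q n (fun j : Fin (m + 1) => IdemOne m q (j : ℕ)) lam) = 1 ∧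
    ((Fintype.card (Vtx m q) : ℂ) ^ n •
        Lmat m q n (fun j : Fin (m + 1) => IdemOne m q (j : ℕ))
          (fun j => if j = 0 then n else 0) = Matrix.of fun _ _ => 1) ∧
    (∀ lam ∈ ShapeSet m n,
      Lmat m q n (fun j : Fin (m + 1) => IdemOne m q (j : ℕ)) lam ∈
        Submodule.span ℂ {M | ∃ mu ∈ ShapeSet m n, M = AdjN m q n mu}) :=
  ⟨fun lam _ => AdjN_eq_Lmat lam, fun lam _ mu _ => Lmat_IdemOne_mul lam mu,
    sum_Lmat_IdemOne, card_smul_Lmat_IdemOne, fun lam _ => Lmat_IdemOne_mem_span lam⟩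

end OHS

end
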